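/- Let E be a lattice effect algebra and define x·y := ((x'∧y)⊕y')' for all x,y ∈ E. Then for all a, b ∈ E: a·b = b·[(b'·a')'·a']' (i.e., the identity (NG5) holds in (E;·,',0,1)). -/

import Mathlib

/-- An effect algebra: a partial algebra (E;⊕,',0,1). The partial operation ⊕ is
modeled by a definedness predicate `D` together with a total function `add` whose
value is only meaningful on defined pairs. -/
structure EffectAlgebra (E : Type*) where
  /-- definedness of `x ⊕ y` -/
  D : E → E → Prop
  /-- the value of `x ⊕ y` (meaningful only when `D x y`) -/
  add : E → E → E
  zero : E
  one : E
  /-- the complement `x'` -/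
  compl : E → E
  /-- (E1) commutativity -/
  E1 : ∀ x y, D x y → D y x ∧ add x y = add y x
  /-- (E2) associativity -/
  E2 : ∀ x y z, D x y → D (add x y) z →
    D y z ∧ D x (add y z) ∧ add (add x y) z = add x (add y z)
  /-- (E3) existence of the complement -/
  E3a : ∀ x, D x (compl x)
  E3b : ∀ x, add x (compl x) = one
  /-- (E3) uniqueness of the complement -/
  E3c : ∀ x y, D x y → add x y = one → y = compl x
  /-- (E4) -/
  E4 : ∀ x, D x one → x = zero

/-- The induced order of an effect algebra: `a ≤ b` iff `a ⊕ c = b` for some `c`. -/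
def EffectAlgebra.le {E : Type*} (A : EffectAlgebra E) (a b : E) : Prop :=
  ∃ c, A.D a c ∧ A.add a c = b

/-- A lattice effect algebra: an effect algebra whose induced order is a lattice,
with meet `inf` and join `sup`. -/
structure LatticeEffectAlgebra (E : Type*) extends EffectAlgebra E where
  inf : E → E → E
  sup : E → E → E
  inf_le_left : ∀ a b, toEffectAlgebra.le (inf a b) a
  inf_le_right : ∀ a b, toEffectAlgebra.le (inf a b) b
  le_inf : ∀ a b c, toEffectAlgebra.le c a → toEffectAlgebra.le c b →
    toEffectAlgebra.le c (inf a b)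
  le_sup_left : ∀ a b, toEffectAlgebra.le a (sup a b)
  le_sup_right : ∀ a b, toEffectAlgebra.le b (sup a b)
  sup_le : ∀ a b c, toEffectAlgebra.le a c → toEffectAlgebra.le b c →
    toEffectAlgebra.le (sup a b) c

/-- The total operation `x·y := ((x'∧y)⊕y')'` on a lattice effect algebra
(well defined since `x'∧y ≤ y`). -/
def LatticeEffectAlgebra.prod {E : Type*} (A : LatticeEffectAlgebra E) (x y : E) : E :=
  A.compl (A.add (A.inf (A.compl x) y) (A.compl y))

/-!
Writing `y ⊖ x := (x ⊕ y')'` for the difference of `x ≤ y`, the product is `x·y = y ⊖ (x' ∧ y)`.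
Since `y ⊖ (y ⊖ x) = x`, two nested products give `(x·y)'·y = x' ∧ y`, so the bracket on the right
of (NG5) is `(b ∧ a')'`. As `b' ≤ (b ∧ a')'`, the right-hand side is then `(b ∧ a')' ⊖ b'`, which
equals `b ⊖ (b ∧ a') = a·b` because complementation reverses differences.
-/

namespace EffectAlgebra

variable {E : Type*} (A : EffectAlgebra E) {x y z : E}

theorem D_symm (h : A.D x y) : A.D y x :=
  (A.E1 x y h).1

protected theorem add_comm (h : A.D x y) : A.add x y = A.add y x :=
  (A.E1 x y h).2

protected theorem compl_compl (x : E) : A.compl (A.compl x) = x :=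
  (A.E3c _ _ (A.D_symm (A.E3a x)) ((A.add_comm (A.E3a x)).symm.trans (A.E3b x))).symm

theorem compl_one : A.compl A.one = A.zero :=
  A.E4 _ (A.D_symm (A.E3a A.one))

theorem D_compl_add (h : A.D x y) : A.D y (A.compl (A.add x y)) :=
  (A.E2 _ _ _ h (A.E3a _)).1

theorem add_compl_add (h : A.D x y) : A.add y (A.compl (A.add x y)) = A.compl x := by
  obtain ⟨-, hD, hassoc⟩ := A.E2 _ _ _ h (A.E3a _)
  exact A.E3c _ _ hD (hassoc.symm.trans (A.E3b _))

theorem compl_compl_add_self (x : E) : A.compl (A.add (A.compl x) x) = A.zero := by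
  rw [← A.add_comm (A.E3a x), A.E3b, A.compl_one]

theorem D_zero (x : E) : A.D x A.zero :=
  A.compl_compl_add_self x ▸ A.D_compl_add (A.D_symm (A.E3a x))

protected theorem add_zero (x : E) : A.add x A.zero = x := by
  rw [← A.compl_compl_add_self x, A.add_compl_add (A.D_symm (A.E3a x)), A.compl_compl]

theorem eq_zero_of_add_eq_zero (h : A.D x y) (hxy : A.add x y = A.zero) : y = A.zero := by
  have hD : A.D (A.add x y) A.one := hxy ▸ A.D_symm (A.D_zero A.one)
  exact A.E4 _ (A.E2 _ _ _ h hD).1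

/-- The difference `y ⊖ x`, meaningful only when `x ≤ y`: then it is the unique `z` with
`x ⊕ z = y`. It is encoded as `(x ⊕ y')'`, the form in which it occurs in the product `x·y`. -/
def sub (y x : E) : E :=
  A.compl (A.add x (A.compl y))

protected theorem sub_self (x : E) : A.sub x x = A.zero := by
  rw [sub, A.E3b, A.compl_one]

protected theorem add_sub_cancel_left (h : A.D x y) : A.sub (A.add x y) x = y := by
  rw [sub, A.add_comm h, A.add_compl_add (A.D_symm h), A.compl_compl]

theorem eq_zero_of_add_eq_self (h : A.D x y) (hxy : A.add x y = x) : y = A.zero := by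
  rw [← A.add_sub_cancel_left h, hxy, A.sub_self]

protected theorem le_refl (x : E) : A.le x x :=
  ⟨A.zero, A.D_zero x, A.add_zero x⟩

protected theorem le_trans (hxy : A.le x y) (hyz : A.le y z) : A.le x z := by
  obtain ⟨c, hc, rfl⟩ := hxy
  obtain ⟨d, hd, rfl⟩ := hyz
  obtain ⟨-, hD, hassoc⟩ := A.E2 _ _ _ hc hd
  exact ⟨A.add c d, hD, hassoc.symm⟩

protected theorem le_antisymm (hxy : A.le x y) (hyx : A.le y x) : x = y := by
  obtain ⟨c, hc, rfl⟩ := hxy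
  obtain ⟨d, hd, hx⟩ := hyx
  obtain ⟨hcd, hD, hassoc⟩ := A.E2 _ _ _ hc hd
  have hcd_zero : A.add c d = A.zero := A.eq_zero_of_add_eq_self hD (hassoc.symm.trans hx)
  have hd_zero : d = A.zero := A.eq_zero_of_add_eq_zero hcd hcd_zero
  rw [← A.add_zero (A.add x c), ← hd_zero, hx]

theorem D_compl_of_le (h : A.le x y) : A.D x (A.compl y) := by
  obtain ⟨c, hc, rfl⟩ := h
  rw [A.add_comm hc]
  exact A.D_compl_add (A.D_symm hc)

protected theorem compl_le_compl (h : A.le x y) : A.le (A.compl y) (A.compl x) := by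
  obtain ⟨c, hc, rfl⟩ := h
  have hD := A.D_compl_add hc
  exact ⟨c, A.D_symm hD, (A.add_comm hD).symm.trans (A.add_compl_add hc)⟩

protected theorem sub_le (h : A.le x y) : A.le (A.sub y x) y := by
  obtain ⟨c, hc, rfl⟩ := h
  rw [A.add_sub_cancel_left hc]
  exact ⟨x, A.D_symm hc, (A.add_comm hc).symm⟩

protected theorem sub_sub_self (h : A.le x y) : A.sub y (A.sub y x) = x := by
  obtain ⟨c, hc, rfl⟩ := h
  rw [A.add_sub_cancel_left hc, A.add_comm hc, A.add_sub_cancel_left (A.D_symm hc)]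

theorem compl_sub_compl (h : A.le x y) : A.sub (A.compl x) (A.compl y) = A.sub y x := by
  rw [sub, sub, A.compl_compl, A.add_comm (A.D_compl_of_le h)]

end EffectAlgebra

namespace LatticeEffectAlgebra

variable {E : Type*} (A : LatticeEffectAlgebra E) {x y : E}

/-- The lattice given by the induced order of `A`. It is not an instance, since a type can carry
several effect algebra structures. -/
abbrev toLattice : Lattice E where
  le := A.le
  le_refl := A.le_refl
  le_trans _ _ _ := A.le_trans
  le_antisymm _ _ := A.le_antisymm
  inf := A.inf
  sup := A.sup
  inf_le_left := A.inf_le_left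
  inf_le_right := A.inf_le_right
  le_inf c a b := A.le_inf a b c
  le_sup_left := A.le_sup_left
  le_sup_right := A.le_sup_right
  sup_le := A.sup_le

protected theorem inf_comm (x y : E) : A.inf x y = A.inf y x :=
  letI := A.toLattice
  _root_.inf_comm x y

protected theorem inf_eq_left (h : A.le x y) : A.inf x y = x :=
  letI := A.toLattice
  _root_.inf_eq_left.mpr h

theorem prod_eq_sub (x y : E) : A.prod x y = A.sub y (A.inf (A.compl x) y) :=
  rfl

theorem prod_of_compl_le (h : A.le (A.compl x) y) : A.prod x y = A.sub y (A.compl x) := by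
  rw [prod_eq_sub, A.inf_eq_left h]

theorem prod_compl_prod (x y : E) :
    A.prod (A.compl (A.prod x y)) y = A.inf (A.compl x) y := by
  have hle : A.le (A.inf (A.compl x) y) y := A.inf_le_right _ _
  have hprod : A.le (A.compl (A.compl (A.prod x y))) y := by
    rw [A.compl_compl]
    exact A.sub_le hle
  rw [A.prod_of_compl_le hprod, A.compl_compl, A.prod_eq_sub, A.sub_sub_self hle]

end LatticeEffectAlgebra

/-- (NG5) holds in `(E;·,',0,1)` for a lattice effect algebra `E` with
`x·y := ((x'∧y)⊕y')'`: `a·b = b·[(b'·a')'·a']'`. -/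
theorem ng5_holds {E : Type*} (A : LatticeEffectAlgebra E) (a b : E) :
    A.prod a b =
      A.prod b (A.compl (A.prod (A.compl (A.prod (A.compl b) (A.compl a))) (A.compl a))) := by
  have hle : A.le (A.inf b (A.compl a)) b := A.inf_le_left _ _
  calc
    A.prod a b = A.sub b (A.inf b (A.compl a)) := by rw [A.prod_eq_sub, A.inf_comm]
    _ = A.sub (A.compl (A.inf b (A.compl a))) (A.compl b) := (A.compl_sub_compl hle).symm
    _ = A.prod b (A.compl (A.inf b (A.compl a))) :=
      (A.prod_of_compl_le (A.compl_le_compl hle)).symm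
    _ = _ := by rw [A.prod_compl_prod, A.compl_compl]
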